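/- If the smooth functions A, B, C, D on an open set U ⊆ ℝ² are such that the symplectic connection ∇ = ∂ + Π is preferred (the four symmetrized covariant-derivative components of its Ricci tensor vanish identically on U), then E₁(K) = E₂(K) = E₃(K) = E₄(K) = 0 on U; that is, on a surface every preferred symplectic connection is a critical symplectic connection. -/

import Mathlib

/-!
The proof prolongs the equation "preferred" to a closed first-order system. Write `p, q, r` for
the Ricci components `R₁₁, R₁₂, R₂₂`. On a surface the vanishing of the symmetrized `∇ Ric` means
that `∇_i R_{jk} = Ω_{ij} u_k + Ω_{ik} u_j` for a one-form `u dx + v dy`. Equality of the mixed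
second derivatives of `p, q, r` forces the symmetric part of the covariant derivative of this
one-form to vanish, so that its covariant derivative is determined by the curl `b = v_x - u_y`;
equality of the mixed derivatives of `u` and `v` then gives
`b_x = 2 (q u - p v)` and `b_y = 2 (r u - q v)`, and the system is closed (`Prolonged`,
`Preferred.prolonged`). At each stage the derivatives of `A, B, C, D` occur only in the
combinations that make up the Ricci tensor.

The moment map equals `p_yy + r_xx - 2 q_xy` plus terms involving only lower derivatives,
and along the closed system it reduces to `K = 3 b` (`Prolonged.Kmap_eq`). Hence all derivatives
of `K` are polynomials in the unknowns of the system, and the four expressions `E_i(K)` vanish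
identically (`Prolonged.critical`).
-/

set_option linter.unusedVariables false

noncomputable section

/-- Partial derivative with respect to the first variable. -/
def px (f : ℝ → ℝ → ℝ) : ℝ → ℝ → ℝ := fun x y => deriv (fun s => f s y) x

/-- Partial derivative with respect to the second variable. -/
def py (f : ℝ → ℝ → ℝ) : ℝ → ℝ → ℝ := fun x y => deriv (fun s => f x s) y

/-- Smoothness on a subset of the plane, for a curried function of two real variables. -/
def SmoothOn2 (f : ℝ → ℝ → ℝ) (U : Set (ℝ × ℝ)) : Prop :=
  ContDiffOn ℝ (⊤ : ℕ∞) (Function.uncurry f) U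

/-- Smoothness on the whole plane, for a curried function of two real variables. -/
def Smooth2 (f : ℝ → ℝ → ℝ) : Prop :=
  ContDiff ℝ (⊤ : ℕ∞) (Function.uncurry f)

/-- First component ρ₁ of the curvature one-form ρ = ρ₁dx + ρ₂dy of the symplectic
connection ∇ = ∂ + Π determined by the functions A, B, C, D in Darboux coordinates. -/
def rho1 (A B C D : ℝ → ℝ → ℝ) : ℝ → ℝ → ℝ := fun x y =>
  (-2) * ((-2) * py (px A) x y - py (py B) x y - px (px D) x y
    + px (fun x' y' => A x' y' * D x' y' - B x' y' * C x' y') x y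
    + 3 * py (fun x' y' => A x' y' ^ 2 - B x' y' * D x' y') x y
    + 2 * A x y * px D x y - D x y * px A x y - B x y * px C x y)

/-- Second component ρ₂ of the curvature one-form. -/
def rho2 (A B C D : ℝ → ℝ → ℝ) : ℝ → ℝ → ℝ := fun x y =>
  (-2) * (2 * py (px D) x y + py (py A) x y + px (px C) x y
    + 3 * px (fun x' y' => A x' y' * C x' y' - D x' y' ^ 2) x y
    - py (fun x' y' => A x' y' * D x' y' - B x' y' * C x' y') x y
    - 2 * D x y * py A x y + A x y * py D x y + C x y * py B x y)

/-- The Cahen–Gutt moment map K(∇) of the symplectic connection ∇ = ∂ + Π. -/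
def Kmap (A B C D : ℝ → ℝ → ℝ) : ℝ → ℝ → ℝ := fun x y =>
  3 * py (py (px A)) x y + 3 * py (px (px D)) x y
    + py (py (py B)) x y + px (px (px C)) x y
    - px B x y * py C x y + py B x y * px C x y
    + 3 * (px A x y * py D x y - py A x y * px D x y)
    + 3 * px (px (fun x' y' => A x' y' * C x' y' - D x' y' ^ 2)) x y
    + 3 * py (py (fun x' y' => B x' y' * D x' y' - A x' y' ^ 2)) x y
    - 3 * py (px (fun x' y' => A x' y' * D x' y' - B x' y' * C x' y')) x y

/-- First component of −H(k), the dx⊗dx⊗dx component of the criticality operator. -/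
def E1 (A B C D k : ℝ → ℝ → ℝ) : ℝ → ℝ → ℝ := fun x y =>
  px (px (px k)) x y - 3 * A x y * px (px k) x y - 3 * B x y * py (px k) x y
    + px k x y * py B x y - px B x y * py k x y

/-- The dy⊗dy⊗dy component of the criticality operator. -/
def E2 (A B C D k : ℝ → ℝ → ℝ) : ℝ → ℝ → ℝ := fun x y =>
  py (py (py k)) x y - 3 * D x y * py (py k) x y - 3 * C x y * py (px k) x y
    + py k x y * px C x y - py C x y * px k x y

/-- The dx⊙dx⊙dy component of the criticality operator. -/
def E3 (A B C D k : ℝ → ℝ → ℝ) : ℝ → ℝ → ℝ := fun x y =>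
  py (px (px k)) x y + 2 * D x y * px (px k) x y - B x y * py (py k) x y
    + A x y * py (px k) x y + px A x y * py k x y - py A x y * px k x y

/-- The dx⊙dy⊙dy component of the criticality operator. -/
def E4 (A B C D k : ℝ → ℝ → ℝ) : ℝ → ℝ → ℝ := fun x y =>
  py (py (px k)) x y + 2 * A x y * py (py k) x y - C x y * px (px k) x y
    + D x y * py (px k) x y + py D x y * px k x y - px D x y * py k x y

/-- ∇ = ∂ + Π is critical symplectic on U: the four components of H(K(∇)) vanish on U. -/
def Critical (A B C D : ℝ → ℝ → ℝ) (U : Set (ℝ × ℝ)) : Prop :=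
  ∀ p ∈ U, E1 A B C D (Kmap A B C D) p.1 p.2 = 0 ∧
    E2 A B C D (Kmap A B C D) p.1 p.2 = 0 ∧
    E3 A B C D (Kmap A B C D) p.1 p.2 = 0 ∧
    E4 A B C D (Kmap A B C D) p.1 p.2 = 0

/-- Ricci component R₁₁. -/
def R11 (A B C D : ℝ → ℝ → ℝ) : ℝ → ℝ → ℝ := fun x y =>
  px A x y + py B x y + 2 * (B x y * D x y - A x y ^ 2)

/-- Ricci component R₂₂. -/
def R22 (A B C D : ℝ → ℝ → ℝ) : ℝ → ℝ → ℝ := fun x y =>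
  px C x y + py D x y + 2 * (A x y * C x y - D x y ^ 2)

/-- Ricci component R₁₂ = R₂₁. -/
def R12 (A B C D : ℝ → ℝ → ℝ) : ℝ → ℝ → ℝ := fun x y =>
  - py A x y - px D x y + A x y * D x y - B x y * C x y

/-- (∇_x Ric)_{xx}, using Γ^x_{xx}=A, Γ^y_{xx}=B, Γ^x_{xy}=−D, Γ^y_{xy}=−A, Γ^x_{yy}=C, Γ^y_{yy}=D. -/
def nxRxx (A B C D : ℝ → ℝ → ℝ) : ℝ → ℝ → ℝ := fun x y =>
  px (R11 A B C D) x y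
    - 2 * (A x y * R11 A B C D x y + B x y * R12 A B C D x y)

/-- (∇_y Ric)_{xx}. -/
def nyRxx (A B C D : ℝ → ℝ → ℝ) : ℝ → ℝ → ℝ := fun x y =>
  py (R11 A B C D) x y
    - 2 * ((-(D x y)) * R11 A B C D x y + (-(A x y)) * R12 A B C D x y)

/-- (∇_x Ric)_{xy}. -/
def nxRxy (A B C D : ℝ → ℝ → ℝ) : ℝ → ℝ → ℝ := fun x y =>
  px (R12 A B C D) x y
    - (A x y * R12 A B C D x y + B x y * R22 A B C D x y)
    - ((-(D x y)) * R11 A B C D x y + (-(A x y)) * R12 A B C D x y)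

/-- (∇_y Ric)_{xy}. -/
def nyRxy (A B C D : ℝ → ℝ → ℝ) : ℝ → ℝ → ℝ := fun x y =>
  py (R12 A B C D) x y
    - ((-(D x y)) * R12 A B C D x y + (-(A x y)) * R22 A B C D x y)
    - (C x y * R11 A B C D x y + D x y * R12 A B C D x y)

/-- (∇_x Ric)_{yy}. -/
def nxRyy (A B C D : ℝ → ℝ → ℝ) : ℝ → ℝ → ℝ := fun x y =>
  px (R22 A B C D) x y
    - 2 * ((-(D x y)) * R12 A B C D x y + (-(A x y)) * R22 A B C D x y)

/-- (∇_y Ric)_{yy}. -/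
def nyRyy (A B C D : ℝ → ℝ → ℝ) : ℝ → ℝ → ℝ := fun x y =>
  py (R22 A B C D) x y
    - 2 * (C x y * R12 A B C D x y + D x y * R22 A B C D x y)

/-- ∇ = ∂ + Π is preferred on U: the symmetrized covariant derivative of Ric vanishes on U. -/
def Preferred (A B C D : ℝ → ℝ → ℝ) (U : Set (ℝ × ℝ)) : Prop :=
  ∀ p ∈ U, nxRxx A B C D p.1 p.2 = 0 ∧
    2 * nxRxy A B C D p.1 p.2 + nyRxx A B C D p.1 p.2 = 0 ∧
    2 * nyRxy A B C D p.1 p.2 + nxRyy A B C D p.1 p.2 = 0 ∧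
    nyRyy A B C D p.1 p.2 = 0

/-- `HasP U f fx fy`: at every point of `U` the function `f` has first partial derivative `fx`
and second partial derivative `fy`. Nothing is required off `U`, so `fx`, `fy` are determined
only on `U`. -/
def HasP (U : Set (ℝ × ℝ)) (f fx fy : ℝ → ℝ → ℝ) : Prop :=
  ∀ x y, (x, y) ∈ U →
    HasDerivAt (fun s => f s y) (fx x y) x ∧ HasDerivAt (fun s => f x s) (fy x y) y

namespace HasP

variable {U : Set (ℝ × ℝ)} {f fx fy g gx gy : ℝ → ℝ → ℝ}

theorem px_eq (h : HasP U f fx fy) {x y : ℝ} (hz : (x, y) ∈ U) : px f x y = fx x y :=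
  (h x y hz).1.deriv

theorem py_eq (h : HasP U f fx fy) {x y : ℝ} (hz : (x, y) ∈ U) : py f x y = fy x y :=
  (h x y hz).2.deriv

theorem add (hf : HasP U f fx fy) (hg : HasP U g gx gy) :
    HasP U (fun x y => f x y + g x y) (fun x y => fx x y + gx x y)
      (fun x y => fy x y + gy x y) := fun x y hz =>
  ⟨(hf x y hz).1.add (hg x y hz).1, (hf x y hz).2.add (hg x y hz).2⟩

theorem sub (hf : HasP U f fx fy) (hg : HasP U g gx gy) :
    HasP U (fun x y => f x y - g x y) (fun x y => fx x y - gx x y)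
      (fun x y => fy x y - gy x y) := fun x y hz =>
  ⟨(hf x y hz).1.sub (hg x y hz).1, (hf x y hz).2.sub (hg x y hz).2⟩

theorem mul (hf : HasP U f fx fy) (hg : HasP U g gx gy) :
    HasP U (fun x y => f x y * g x y) (fun x y => fx x y * g x y + f x y * gx x y)
      (fun x y => fy x y * g x y + f x y * gy x y) := fun x y hz =>
  ⟨(hf x y hz).1.mul (hg x y hz).1, (hf x y hz).2.mul (hg x y hz).2⟩

theorem cmul (c : ℝ) (hf : HasP U f fx fy) :
    HasP U (fun x y => c * f x y) (fun x y => c * fx x y) (fun x y => c * fy x y) :=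
  fun x y hz => ⟨(hf x y hz).1.const_mul c, (hf x y hz).2.const_mul c⟩

/-- `HasP U` depends only on the values on `U` of the three functions; for the first one this uses
that `U` is open. -/
theorem congr (hU : IsOpen U) (hf : HasP U f fx fy)
    (h : ∀ x y, (x, y) ∈ U → g x y = f x y)
    (h1 : ∀ x y, (x, y) ∈ U → fx x y = gx x y)
    (h2 : ∀ x y, (x, y) ∈ U → fy x y = gy x y) : HasP U g gx gy := by
  intro x y hz
  have hmem := hU.mem_nhds hz
  have e1 : ∀ᶠ s in nhds x, (s, y) ∈ U :=
    (Continuous.prodMk continuous_id continuous_const).continuousAt.preimage_mem_nhds hmem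
  have e2 : ∀ᶠ s in nhds y, (x, s) ∈ U :=
    (Continuous.prodMk continuous_const continuous_id).continuousAt.preimage_mem_nhds hmem
  rw [← h1 x y hz, ← h2 x y hz]
  exact ⟨(hf x y hz).1.congr_of_eventuallyEq (e1.mono fun s hs => h s y hs),
    (hf x y hz).2.congr_of_eventuallyEq (e2.mono fun s hs => h x s hs)⟩

end HasP

namespace SmoothOn2

variable {U : Set (ℝ × ℝ)} {f g : ℝ → ℝ → ℝ}

theorem differentiableAt (hU : IsOpen U) (hf : SmoothOn2 f U) {x y : ℝ} (hz : (x, y) ∈ U) :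
    DifferentiableAt ℝ (Function.uncurry f) (x, y) :=
  (ContDiffOn.contDiffAt hf (hU.mem_nhds hz)).differentiableAt (by simp)

theorem hasP_fderiv (hU : IsOpen U) (hf : SmoothOn2 f U) :
    HasP U f (fun x y => fderiv ℝ (Function.uncurry f) (x, y) (1, 0))
      (fun x y => fderiv ℝ (Function.uncurry f) (x, y) (0, 1)) := by
  intro x y hz
  have hd := (hf.differentiableAt hU hz).hasFDerivAt
  constructor
  · exact hd.comp_hasDerivAt (f := fun s => (s, y)) x
      ((hasDerivAt_id x).prodMk (hasDerivAt_const x y))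
  · exact hd.comp_hasDerivAt (f := fun s => (x, s)) y
      ((hasDerivAt_const y x).prodMk (hasDerivAt_id y))

theorem hasP (hU : IsOpen U) (hf : SmoothOn2 f U) : HasP U f (px f) (py f) :=
  (hf.hasP_fderiv hU).congr hU (fun _ _ _ => rfl)
    (fun _ _ hz => ((hf.hasP_fderiv hU).px_eq hz).symm)
    (fun _ _ hz => ((hf.hasP_fderiv hU).py_eq hz).symm)

theorem fderiv_apply (hU : IsOpen U) (hf : SmoothOn2 f U) (w : ℝ × ℝ) :
    ContDiffOn ℝ (⊤ : ℕ∞) (fun z => fderiv ℝ (Function.uncurry f) z w) U :=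
  (ContDiffOn.fderiv_of_isOpen hf hU (m := (⊤ : ℕ∞)) (by simp)).clm_apply contDiffOn_const

protected theorem px (hU : IsOpen U) (hf : SmoothOn2 f U) : SmoothOn2 (px f) U :=
  (hf.fderiv_apply hU (1, 0)).congr fun _ hz => (hf.hasP_fderiv hU).px_eq hz

protected theorem py (hU : IsOpen U) (hf : SmoothOn2 f U) : SmoothOn2 (py f) U :=
  (hf.fderiv_apply hU (0, 1)).congr fun _ hz => (hf.hasP_fderiv hU).py_eq hz

theorem add (hf : SmoothOn2 f U) (hg : SmoothOn2 g U) :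
    SmoothOn2 (fun x y => f x y + g x y) U := ContDiffOn.add hf hg

theorem sub (hf : SmoothOn2 f U) (hg : SmoothOn2 g U) :
    SmoothOn2 (fun x y => f x y - g x y) U := ContDiffOn.sub hf hg

theorem mul (hf : SmoothOn2 f U) (hg : SmoothOn2 g U) :
    SmoothOn2 (fun x y => f x y * g x y) U := ContDiffOn.mul hf hg

theorem cmul (c : ℝ) (hf : SmoothOn2 f U) : SmoothOn2 (fun x y => c * f x y) U :=
  ContDiffOn.mul contDiffOn_const hf

theorem congr (hf : SmoothOn2 f U) (h : ∀ x y, g x y = f x y) : SmoothOn2 g U :=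
  ContDiffOn.congr hf fun z _ => h z.1 z.2

theorem fderiv_comm (hU : IsOpen U) (hf : SmoothOn2 f U) {x y : ℝ} (hz : (x, y) ∈ U)
    (v w : ℝ × ℝ) :
    fderiv ℝ (fun z => fderiv ℝ (Function.uncurry f) z v) (x, y) w
      = fderiv ℝ (fun z => fderiv ℝ (Function.uncurry f) z w) (x, y) v := by
  have hc : ContDiffAt ℝ (⊤ : ℕ∞) (Function.uncurry f) (x, y) :=
    ContDiffOn.contDiffAt hf (hU.mem_nhds hz)
  have hs : IsSymmSndFDerivAt ℝ (Function.uncurry f) (x, y) :=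
    hc.isSymmSndFDerivAt (by
      rw [minSmoothness_of_isRCLikeNormedField]
      exact WithTop.coe_le_coe.2 (le_top : (2 : ℕ∞) ≤ ⊤))
  have hd : DifferentiableAt ℝ (fderiv ℝ (Function.uncurry f)) (x, y) :=
    (hc.fderiv_right (m := (⊤ : ℕ∞)) (by simp)).differentiableAt (by simp)
  rw [fderiv_clm_apply hd (differentiableAt_const _),
    fderiv_clm_apply hd (differentiableAt_const _)]
  simpa using hs.eq w v

/-- Symmetry of second partial derivatives. -/
theorem px_py (hU : IsOpen U) (hf : SmoothOn2 f U) {x y : ℝ} (hz : (x, y) ∈ U) :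
    px (py f) x y = py (px f) x y := by
  have h1 : SmoothOn2 (fun x y => fderiv ℝ (Function.uncurry f) (x, y) (1, 0)) U :=
    hf.fderiv_apply hU (1, 0)
  have h2 : SmoothOn2 (fun x y => fderiv ℝ (Function.uncurry f) (x, y) (0, 1)) U :=
    hf.fderiv_apply hU (0, 1)
  have e1 := ((h1.hasP_fderiv hU).congr hU (g := px f)
    (fun _ _ h => (hf.hasP_fderiv hU).px_eq h) (fun _ _ _ => rfl) (fun _ _ _ => rfl)).py_eq hz
  have e2 := ((h2.hasP_fderiv hU).congr hU (g := py f)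
    (fun _ _ h => (hf.hasP_fderiv hU).py_eq h) (fun _ _ _ => rfl) (fun _ _ _ => rfl)).px_eq hz
  rw [e1, e2]
  exact hf.fderiv_comm hU hz (0, 1) (1, 0)

end SmoothOn2

/-- The integrability condition behind every step of the prolongation: if the partial derivatives
of a smooth `f` are `fx`, `fy`, then the mixed derivatives of `fx` and `fy` agree. -/
theorem HasP.compat {U : Set (ℝ × ℝ)} {f fx fy fxx fxy fyx fyy : ℝ → ℝ → ℝ} (hU : IsOpen U)
    (hf : SmoothOn2 f U) (h : HasP U f fx fy) (hx : HasP U fx fxx fxy) (hy : HasP U fy fyx fyy)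
    {x y : ℝ} (hz : (x, y) ∈ U) : fxy x y = fyx x y := by
  have e1 := (hx.congr hU (g := px f) (fun _ _ h' => h.px_eq h') (fun _ _ _ => rfl)
    (fun _ _ _ => rfl)).py_eq hz
  have e2 := (hy.congr hU (g := py f) (fun _ _ h' => h.py_eq h') (fun _ _ _ => rfl)
    (fun _ _ _ => rfl)).px_eq hz
  rw [← e1, ← e2, hf.px_py hU hz]

/-- The closed first-order system satisfied on `U` by a preferred connection: `p, q, r` are the
Ricci components `R₁₁, R₁₂, R₂₂`, the one-form `u dx + v dy` is defined by
`∇_i R_{jk} = Ω_{ij} u_k + Ω_{ik} u_j`, and `b = v_x - u_y` is its exterior derivative. -/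
structure Prolonged (U : Set (ℝ × ℝ)) (A B C D p q r u v b : ℝ → ℝ → ℝ) : Prop where
  isOpen : IsOpen U
  hA : HasP U A (px A) (py A)
  hB : HasP U B (px B) (py B)
  hC : HasP U C (px C) (py C)
  hD : HasP U D (px D) (py D)
  B_y : ∀ x y, (x, y) ∈ U →
    py B x y = p x y - px A x y - 2 * (B x y * D x y - A x y * A x y)
  D_y : ∀ x y, (x, y) ∈ U →
    py D x y = r x y - px C x y - 2 * (A x y * C x y - D x y * D x y)
  D_x : ∀ x y, (x, y) ∈ U →
    px D x y = -q x y - py A x y + A x y * D x y - B x y * C x y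
  hp : HasP U p (fun x y => 2 * (A x y * p x y + B x y * q x y))
    (fun x y => (-2) * (D x y * p x y + A x y * q x y) - 2 * u x y)
  hq : HasP U q (fun x y => B x y * r x y - D x y * p x y + u x y)
    (fun x y => C x y * p x y - A x y * r x y - v x y)
  hr : HasP U r (fun x y => (-2) * (D x y * q x y + A x y * r x y) + 2 * v x y)
    (fun x y => 2 * (C x y * q x y + D x y * r x y))
  hu : HasP U u (fun x y => A x y * u x y + B x y * v x y)
    (fun x y => (-1) * (D x y * u x y + A x y * v x y) - (1 / 2) * b x y)
  hv : HasP U v (fun x y => (-1) * (D x y * u x y + A x y * v x y) + (1 / 2) * b x y)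
    (fun x y => C x y * u x y + D x y * v x y)
  hb : HasP U b (fun x y => 2 * (q x y * u x y - p x y * v x y))
    (fun x y => 2 * (r x y * u x y - q x y * v x y))

/-- If `K = 3b` for a solution of the closed system, the connection is critical: each `E_i(K)`
becomes a polynomial in the unknowns and `A, B, C, D` with their first derivatives, and it vanishes. -/
theorem Prolonged.critical {U : Set (ℝ × ℝ)} {A B C D p q r u v b k : ℝ → ℝ → ℝ}
    (S : Prolonged U A B C D p q r u v b) (hk : ∀ x y, (x, y) ∈ U → k x y = 3 * b x y)
    {x y : ℝ} (hz : (x, y) ∈ U) :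
    E1 A B C D k x y = 0 ∧ E2 A B C D k x y = 0 ∧ E3 A B C D k x y = 0 ∧
      E4 A B C D k x y = 0 := by
  have hU := S.isOpen
  have k1 : HasP U k (fun x y => 6 * (q x y * u x y - p x y * v x y))
      (fun x y => 6 * (r x y * u x y - q x y * v x y)) :=
    (S.hb.cmul 3).congr hU hk (fun _ _ _ => by ring) (fun _ _ _ => by ring)
  -- Second derivatives of `k`: Christoffel terms plus the tensor `6 u_i u_j - 3 b R_{ij}`.
  have kx : HasP U (px k)
      (fun x y => 6 * (A x y * (q x y * u x y - p x y * v x y)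
        + B x y * (r x y * u x y - q x y * v x y)) - 3 * (b x y * p x y) + 6 * (u x y * u x y))
      (fun x y => (-6) * (D x y * (q x y * u x y - p x y * v x y)
        + A x y * (r x y * u x y - q x y * v x y)) - 3 * (b x y * q x y)
        + 6 * (u x y * v x y)) :=
    (((S.hq.mul S.hu).sub (S.hp.mul S.hv)).cmul 6).congr hU
      (fun _ _ h => k1.px_eq h) (fun _ _ _ => by ring) (fun _ _ _ => by ring)
  have ky : HasP U (py k)
      (fun x y => (-6) * (D x y * (q x y * u x y - p x y * v x y)
        + A x y * (r x y * u x y - q x y * v x y)) - 3 * (b x y * q x y) + 6 * (u x y * v x y))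
      (fun x y => 6 * (C x y * (q x y * u x y - p x y * v x y)
        + D x y * (r x y * u x y - q x y * v x y)) - 3 * (b x y * r x y)
        + 6 * (v x y * v x y)) :=
    (((S.hr.mul S.hu).sub (S.hq.mul S.hv)).cmul 6).congr hU
      (fun _ _ h => k1.py_eq h) (fun _ _ _ => by ring) (fun _ _ _ => by ring)
  have w1 := (S.hq.mul S.hu).sub (S.hp.mul S.hv)
  have w2 := (S.hr.mul S.hu).sub (S.hq.mul S.hv)
  have kxx := (((((S.hA.mul w1).add (S.hB.mul w2)).cmul 6).sub ((S.hb.mul S.hp).cmul 3)).add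
    ((S.hu.mul S.hu).cmul 6)).congr hU (g := px (px k))
      (fun _ _ h => kx.px_eq h) (fun _ _ _ => rfl) (fun _ _ _ => rfl)
  have kxy := (((((S.hD.mul w1).add (S.hA.mul w2)).cmul (-6)).sub ((S.hb.mul S.hq).cmul 3)).add
    ((S.hu.mul S.hv).cmul 6)).congr hU (g := py (px k))
      (fun _ _ h => kx.py_eq h) (fun _ _ _ => rfl) (fun _ _ _ => rfl)
  have kyy := (((((S.hC.mul w1).add (S.hD.mul w2)).cmul 6).sub ((S.hb.mul S.hr).cmul 3)).add
    ((S.hv.mul S.hv).cmul 6)).congr hU (g := py (py k))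
      (fun _ _ h => ky.py_eq h) (fun _ _ _ => rfl) (fun _ _ _ => rfl)
  have eB := S.B_y x y hz
  have eDy := S.D_y x y hz
  have eDx := S.D_x x y hz
  refine ⟨?_, ?_, ?_, ?_⟩
  · simp only [E1, kxx.px_eq hz, kx.px_eq hz, kx.py_eq hz, k1.px_eq hz, k1.py_eq hz, eB]
    ring
  · simp only [E2, kyy.py_eq hz, ky.py_eq hz, kx.py_eq hz, k1.px_eq hz, k1.py_eq hz, eDy]
    ring
  · simp only [E3, kxx.py_eq hz, kx.px_eq hz, ky.py_eq hz, kx.py_eq hz, k1.px_eq hz,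
      k1.py_eq hz, eB]
    ring
  · simp only [E4, kxy.py_eq hz, kx.px_eq hz, ky.py_eq hz, kx.py_eq hz, k1.px_eq hz,
      k1.py_eq hz, eDx, eDy]
    ring

/-- A preferred connection solves the closed system; each new equation is the integrability
condition of the previous ones. -/
theorem Preferred.prolonged {U : Set (ℝ × ℝ)} (hU : IsOpen U) {A B C D : ℝ → ℝ → ℝ}
    (hA : SmoothOn2 A U) (hB : SmoothOn2 B U) (hC : SmoothOn2 C U)
    (hD : SmoothOn2 D U) (hpref : Preferred A B C D U) :
    ∃ u v b, Prolonged U A B C D (R11 A B C D) (R12 A B C D) (R22 A B C D) u v b := by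
  have sp : SmoothOn2 (R11 A B C D) U :=
    (((hA.px hU).add (hB.py hU)).add (((hB.mul hD).sub (hA.mul hA)).cmul 2)).congr
      fun x y => by simp only [R11]; ring
  have sr : SmoothOn2 (R22 A B C D) U :=
    (((hC.px hU).add (hD.py hU)).add (((hA.mul hC).sub (hD.mul hD)).cmul 2)).congr
      fun x y => by simp only [R22]; ring
  have sq : SmoothOn2 (R12 A B C D) U :=
    (((hA.mul hD).sub (hB.mul hC)).sub ((hA.py hU).add (hD.px hU))).congr
      fun x y => by simp only [R12]; ring
  have eB : ∀ x y, (x, y) ∈ U → py B x y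
      = R11 A B C D x y - px A x y - 2 * (B x y * D x y - A x y * A x y) :=
    fun x y _ => by simp only [R11]; ring
  have eDy : ∀ x y, (x, y) ∈ U → py D x y
      = R22 A B C D x y - px C x y - 2 * (A x y * C x y - D x y * D x y) :=
    fun x y _ => by simp only [R22]; ring
  have eDx : ∀ x y, (x, y) ∈ U → px D x y
      = -R12 A B C D x y - py A x y + A x y * D x y - B x y * C x y :=
    fun x y _ => by simp only [R12]; ring
  simp only [Preferred, Prod.forall, nxRxx, nyRxx, nxRxy, nyRxy, nxRyy, nyRyy] at hpref
  generalize R11 A B C D = p at *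
  generalize R12 A B C D = q at *
  generalize R22 A B C D = r at *
  obtain ⟨u, hudef⟩ : ∃ u : ℝ → ℝ → ℝ, ∀ x y, u x y
      = (-1 / 2) * py p x y - (D x y * p x y + A x y * q x y) := ⟨_, fun _ _ => rfl⟩
  obtain ⟨v, hvdef⟩ : ∃ v : ℝ → ℝ → ℝ, ∀ x y, v x y
      = C x y * p x y - A x y * r x y - py q x y := ⟨_, fun _ _ => rfl⟩
  obtain ⟨b, hbdef⟩ : ∃ b : ℝ → ℝ → ℝ, ∀ x y, b x y = px v x y - py u x y :=
    ⟨_, fun _ _ => rfl⟩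
  have su : SmoothOn2 u U :=
    (((sp.py hU).cmul (-1 / 2)).sub ((hD.mul sp).add (hA.mul sq))).congr hudef
  have sv : SmoothOn2 v U :=
    (((hC.mul sp).sub (hA.mul sr)).sub (sq.py hU)).congr hvdef
  have sb : SmoothOn2 b U := ((sv.px hU).sub (su.py hU)).congr hbdef
  have dA := hA.hasP hU
  have dB := hB.hasP hU
  have dC := hC.hasP hU
  have dD := hD.hasP hU
  have dp : HasP U p (fun x y => 2 * (A x y * p x y + B x y * q x y))
      (fun x y => (-2) * (D x y * p x y + A x y * q x y) - 2 * u x y) := by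
    refine (sp.hasP hU).congr hU (fun _ _ _ => rfl) (fun x y h => ?_) (fun x y h => ?_)
    · linear_combination (hpref x y h).1
    · rw [hudef]; ring
  have dq : HasP U q (fun x y => B x y * r x y - D x y * p x y + u x y)
      (fun x y => C x y * p x y - A x y * r x y - v x y) := by
    refine (sq.hasP hU).congr hU (fun _ _ _ => rfl) (fun x y h => ?_) (fun x y h => ?_)
    · rw [hudef]; linear_combination (1 / 2) * (hpref x y h).2.1
    · rw [hvdef]; ring
  have dr : HasP U r (fun x y => (-2) * (D x y * q x y + A x y * r x y) + 2 * v x y)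
      (fun x y => 2 * (C x y * q x y + D x y * r x y)) := by
    refine (sr.hasP hU).congr hU (fun _ _ _ => rfl) (fun x y h => ?_) (fun x y h => ?_)
    · rw [hvdef]; linear_combination (hpref x y h).2.2.1
    · linear_combination (hpref x y h).2.2.2
  have du0 := su.hasP hU
  have dv0 := sv.hasP hU
  have hux : ∀ x y, (x, y) ∈ U → px u x y = A x y * u x y + B x y * v x y := fun x y h => by
    have c := dp.compat hU sp (((dA.mul dp).add (dB.mul dq)).cmul 2)
      ((((dD.mul dp).add (dA.mul dq)).cmul (-2)).sub (du0.cmul 2)) h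
    simp only [eB x y h, eDx x y h] at c
    linear_combination (1 / 2) * c
  have hvy : ∀ x y, (x, y) ∈ U → py v x y = C x y * u x y + D x y * v x y := fun x y h => by
    have c := dr.compat hU sr ((((dD.mul dq).add (dA.mul dr)).cmul (-2)).add (dv0.cmul 2))
      (((dC.mul dq).add (dD.mul dr)).cmul 2) h
    simp only [eDx x y h, eDy x y h] at c
    linear_combination (1 / 2) * c
  have hsum : ∀ x y, (x, y) ∈ U →
      px v x y + py u x y = (-2) * (D x y * u x y + A x y * v x y) := fun x y h => by
    have c := dq.compat hU sq (((dB.mul dr).sub (dD.mul dp)).add du0)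
      (((dC.mul dp).sub (dA.mul dr)).sub dv0) h
    simp only [eB x y h, eDy x y h] at c
    linear_combination c
  have du : HasP U u (fun x y => A x y * u x y + B x y * v x y)
      (fun x y => (-1) * (D x y * u x y + A x y * v x y) - (1 / 2) * b x y) :=
    du0.congr hU (fun _ _ _ => rfl) hux fun x y h => by
      rw [hbdef]; linear_combination (1 / 2) * hsum x y h
  have dv : HasP U v (fun x y => (-1) * (D x y * u x y + A x y * v x y) + (1 / 2) * b x y)
      (fun x y => C x y * u x y + D x y * v x y) :=
    dv0.congr hU (fun _ _ _ => rfl) (fun x y h => by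
      rw [hbdef]; linear_combination (1 / 2) * hsum x y h) hvy
  have db0 := sb.hasP hU
  have db : HasP U b (fun x y => 2 * (q x y * u x y - p x y * v x y))
      (fun x y => 2 * (r x y * u x y - q x y * v x y)) := by
    refine db0.congr hU (fun _ _ _ => rfl) (fun x y h => ?_) (fun x y h => ?_)
    · have c := du.compat hU su ((dA.mul du).add (dB.mul dv))
        ((((dD.mul du).add (dA.mul dv)).cmul (-1)).sub (db0.cmul (1 / 2))) h
      simp only [eB x y h, eDx x y h] at c
      linear_combination 2 * c
    · have c := dv.compat hU sv ((((dD.mul du).add (dA.mul dv)).cmul (-1)).add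
        (db0.cmul (1 / 2))) ((dC.mul du).add (dD.mul dv)) h
      simp only [eDx x y h, eDy x y h] at c
      linear_combination 2 * c
  exact ⟨u, v, b, hU, dA, dB, dC, dD, eB, eDy, eDx, dp, dq, dr, du, dv, db⟩

/-- The moment map is three times the curl of the one-form `u dx + v dy`. -/
theorem Prolonged.Kmap_eq {U : Set (ℝ × ℝ)} {A B C D u v b : ℝ → ℝ → ℝ}
    (hA : SmoothOn2 A U) (hB : SmoothOn2 B U) (hC : SmoothOn2 C U) (hD : SmoothOn2 D U)
    (S : Prolonged U A B C D (R11 A B C D) (R12 A B C D) (R22 A B C D) u v b)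
    {x y : ℝ} (hz : (x, y) ∈ U) : Kmap A B C D x y = 3 * b x y := by
  have hU := S.isOpen
  obtain ⟨P, hP⟩ : ∃ P : ℝ → ℝ → ℝ, P = fun x y => A x y * C x y - D x y ^ 2 := ⟨_, rfl⟩
  obtain ⟨Q, hQ⟩ : ∃ Q : ℝ → ℝ → ℝ, Q = fun x y => B x y * D x y - A x y ^ 2 := ⟨_, rfl⟩
  obtain ⟨T, hT⟩ : ∃ T : ℝ → ℝ → ℝ, T = fun x y => A x y * D x y - B x y * C x y := ⟨_, rfl⟩
  have sP : SmoothOn2 P U := ((hA.mul hC).sub (hD.mul hD)).congr fun x y => by rw [hP]; ring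
  have sQ : SmoothOn2 Q U := ((hB.mul hD).sub (hA.mul hA)).congr fun x y => by rw [hQ]; ring
  have sT : SmoothOn2 T U := ((hA.mul hD).sub (hB.mul hC)).congr fun x y => by rw [hT]
  have dA := S.hA
  have dB := S.hB
  have dC := S.hC
  have dD := S.hD
  have dAx := (hA.px hU).hasP hU
  have dAy := (hA.py hU).hasP hU
  have dBx := (hB.px hU).hasP hU
  have dBy := (hB.py hU).hasP hU
  have dCx := (hC.px hU).hasP hU
  have dCy := (hC.py hU).hasP hU
  have dDx := (hD.px hU).hasP hU
  have dDy := (hD.py hU).hasP hU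
  have dP : HasP U P _ _ := ((dA.mul dC).sub (dD.mul dD)).congr hU
    (fun x y _ => by rw [hP]; ring) (fun _ _ _ => rfl) (fun _ _ _ => rfl)
  have dQ : HasP U Q _ _ := ((dB.mul dD).sub (dA.mul dA)).congr hU
    (fun x y _ => by rw [hQ]; ring) (fun _ _ _ => rfl) (fun _ _ _ => rfl)
  have dT : HasP U T _ _ := ((dA.mul dD).sub (dB.mul dC)).congr hU
    (fun x y _ => by rw [hT]) (fun _ _ _ => rfl) (fun _ _ _ => rfl)
  have dPx : HasP U (px P) _ _ := (((dAx.mul dC).add (dA.mul dCx)).sub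
    ((dDx.mul dD).add (dD.mul dDx))).congr hU
    (fun _ _ h => dP.px_eq h) (fun _ _ _ => rfl) (fun _ _ _ => rfl)
  have dQy : HasP U (py Q) _ _ := (((dBy.mul dD).add (dB.mul dDy)).sub
    ((dAy.mul dA).add (dA.mul dAy))).congr hU
    (fun _ _ h => dQ.py_eq h) (fun _ _ _ => rfl) (fun _ _ _ => rfl)
  have dTx : HasP U (px T) _ _ := (((dAx.mul dD).add (dA.mul dDx)).sub
    ((dBx.mul dC).add (dB.mul dCx))).congr hU
    (fun _ _ h => dT.px_eq h) (fun _ _ _ => rfl) (fun _ _ _ => rfl)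
  -- First derivatives of the Ricci components, directly from their definitions.
  have jp : HasP U (R11 A B C D) _ _ := ((dAx.add dBy).add ((sQ.hasP hU).cmul 2)).congr hU
    (fun x y _ => by rw [hQ, R11]) (fun _ _ _ => rfl) (fun _ _ _ => rfl)
  have jr : HasP U (R22 A B C D) _ _ := ((dCx.add dDy).add ((sP.hasP hU).cmul 2)).congr hU
    (fun x y _ => by rw [hP, R22]) (fun _ _ _ => rfl) (fun _ _ _ => rfl)
  have jq : HasP U (R12 A B C D) _ _ := ((sT.hasP hU).sub (dAy.add dDx)).congr hU
    (fun x y _ => by simp only [hT, R12]; ring) (fun _ _ _ => rfl) (fun _ _ _ => rfl)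
  -- Second derivatives, once from the definitions and once from the closed system.
  have jpy : HasP U (py (R11 A B C D)) _ _ :=
    (((((hA.px hU).py hU).hasP hU).add (((hB.py hU).py hU).hasP hU)).add
      (((sQ.py hU).hasP hU).cmul 2)).congr hU
    (fun _ _ h => jp.py_eq h) (fun _ _ _ => rfl) (fun _ _ _ => rfl)
  have jrx : HasP U (px (R22 A B C D)) _ _ :=
    (((((hC.px hU).px hU).hasP hU).add (((hD.py hU).px hU).hasP hU)).add
      (((sP.px hU).hasP hU).cmul 2)).congr hU
    (fun _ _ h => jr.px_eq h) (fun _ _ _ => rfl) (fun _ _ _ => rfl)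
  have jqx : HasP U (px (R12 A B C D)) _ _ :=
    (((sT.px hU).hasP hU).sub ((((hA.py hU).px hU).hasP hU).add
      (((hD.px hU).px hU).hasP hU))).congr hU
    (fun _ _ h => jq.px_eq h) (fun _ _ _ => rfl) (fun _ _ _ => rfl)
  have rpy : HasP U (py (R11 A B C D)) _ _ :=
    ((((dD.mul S.hp).add (dA.mul S.hq)).cmul (-2)).sub (S.hu.cmul 2)).congr hU
    (fun _ _ h => S.hp.py_eq h) (fun _ _ _ => rfl) (fun _ _ _ => rfl)
  have rrx : HasP U (px (R22 A B C D)) _ _ :=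
    ((((dD.mul S.hq).add (dA.mul S.hr)).cmul (-2)).add (S.hv.cmul 2)).congr hU
    (fun _ _ h => S.hr.px_eq h) (fun _ _ _ => rfl) (fun _ _ _ => rfl)
  have rqx : HasP U (px (R12 A B C D)) _ _ :=
    (((dB.mul S.hr).sub (dD.mul S.hp)).add S.hu).congr hU
    (fun _ _ h => S.hq.px_eq h) (fun _ _ _ => rfl) (fun _ _ _ => rfl)
  have e1 := (jpy.py_eq hz).symm.trans (rpy.py_eq hz)
  have e2 := (jrx.px_eq hz).symm.trans (rrx.px_eq hz)
  have e3 := (jqx.py_eq hz).symm.trans (rqx.py_eq hz)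
  have f1 := (jp.px_eq hz).symm.trans (S.hp.px_eq hz)
  have f2 := (jp.py_eq hz).symm.trans (S.hp.py_eq hz)
  have f3 := (jq.px_eq hz).symm.trans (S.hq.px_eq hz)
  have f4 := (jq.py_eq hz).symm.trans (S.hq.py_eq hz)
  have f5 := (jr.px_eq hz).symm.trans (S.hr.px_eq hz)
  have f6 := (jr.py_eq hz).symm.trans (S.hr.py_eq hz)
  -- Interchange of derivatives, also inside a further derivative.
  have cA : py (px (py A)) x y = py (py (px A)) x y :=
    ((((hA.px hU).py hU).hasP hU).congr hU (g := px (py A)) (fun _ _ h => hA.px_py hU h)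
      (fun _ _ _ => rfl) (fun _ _ _ => rfl)).py_eq hz
  have cD : px (px (py D)) x y = py (px (px D)) x y :=
    (((((hD.px hU).py hU).hasP hU).congr hU (g := px (py D)) (fun _ _ h => hD.px_py hU h)
      (fun _ _ _ => rfl) (fun _ _ _ => rfl)).px_eq hz).trans ((hD.px hU).px_py hU hz)
  simp only [cA, cD, hA.px_py hU hz, hB.px_py hU hz, hD.px_py hU hz,
    dPx.px_eq hz, dQy.py_eq hz, dTx.py_eq hz, dP.px_eq hz, dP.py_eq hz, dQ.px_eq hz,
    dQ.py_eq hz, dT.px_eq hz, dT.py_eq hz] at e1 e2 e3 f1 f2 f3 f4 f5 f6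
  rw [Kmap, ← hP, ← hQ, ← hT]
  simp only [dPx.px_eq hz, dQy.py_eq hz, dTx.py_eq hz]
  have eB := S.B_y x y hz
  have eDy := S.D_y x y hz
  have eDx := S.D_x x y hz
  generalize R11 A B C D x y = p at *
  generalize R12 A B C D x y = q at *
  generalize R22 A B C D x y = r at *
  simp only [eB, eDy, eDx] at *
  linear_combination e1 + e2 - 2 * e3 + A x y * (f5 + 2 * f4) + D x y * (f2 + 2 * f3)
    + C x y * f1 + B x y * f6

/-- on a surface, a preferred symplectic connection is critical. -/
theorem stmt1 (U : Set (ℝ × ℝ)) (hU : IsOpen U) (A B C D : ℝ → ℝ → ℝ)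
    (hA : SmoothOn2 A U) (hB : SmoothOn2 B U) (hC : SmoothOn2 C U)
    (hD : SmoothOn2 D U) (hpref : Preferred A B C D U) :
    Critical A B C D U := by
  obtain ⟨u, v, b, S⟩ := hpref.prolonged hU hA hB hC hD
  exact fun z hz => S.critical (fun _ _ h => S.Kmap_eq hA hB hC hD h) hz
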